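/- Disjointness of the useful predicates: for every program p, at most one of the following three holds: genVar(x, p) for some variable x, ufabs(p), ufinert(p) (i.e., the three predicates are pairwise incompatible). -/

import Mathlib

/-! ## Terms of the pure λ-calculus (named syntax) -/

inductive Term : Type
  | var : ℕ → Term
  | lam : ℕ → Term → Term
  | app : Term → Term → Term
  deriving DecidableEq

namespace Term

/-- Size of a term: |x| = 1, |λx.t| = |t|+1, |t u| = |t|+|u|+1. -/
def size : Term → ℕ
  | var _ => 1
  | lam _ t => size t + 1
  | app t u => size t + size u + 1

/-- Free variables of a term. -/
def fv : Term → Finset ℕ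
  | var x => {x}
  | lam x t => (fv t).erase x
  | app t u => fv t ∪ fv u

/-- Meta-level substitution t{x←u}. -/
def subst (x : ℕ) (u : Term) : Term → Term
  | var y => if y = x then u else var y
  | lam y t => if y = x then lam y t else lam y (subst x u t)
  | app t s => app (subst x u t) (subst x u s)

def isVarB : Term → Bool
  | var _ => true
  | _ => false

/-- Values are abstractions (variables are not values). -/
def IsValue (t : Term) : Prop := ∃ x u, t = lam x u

/-- Needed variables of a term. -/
def nv : Term → Finset ℕ
  | var x => {x}
  | lam _ _ => ∅
  | app t u => nv t ∪ nv u

/-- Applied variables of a term. -/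
def anv : Term → Finset ℕ
  | var _ => ∅
  | lam _ _ => ∅
  | app (var x) u => insert x (anv u)
  | app (lam y t) u => anv (lam y t) ∪ anv u
  | app (app t s) u => anv (app t s) ∪ anv u

/-- Unapplied variables of a term. -/
def unv : Term → Finset ℕ
  | var x => {x}
  | lam _ _ => ∅
  | app (var _) u => unv u
  | app (lam y t) u => unv (lam y t) ∪ unv u
  | app (app t s) u => unv (app t s) ∪ unv u

end Term

/-! ## Inert terms and fireballs: i ::= x | i f,  f ::= v | i -/

mutual
  inductive Term.Inert : Term → Prop
    | var (x : ℕ) : Term.Inert (Term.var x)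
    | app {i f : Term} : Term.Inert i → Term.Fireball f → Term.Inert (Term.app i f)
  inductive Term.Fireball : Term → Prop
    | val {x : ℕ} {t : Term} : Term.Fireball (Term.lam x t)
    | inert {i : Term} : Term.Inert i → Term.Fireball i
end

/-- Non-variable inert terms i⁺. -/
def Term.InertPlus (t : Term) : Prop := t.Inert ∧ ∀ x, t ≠ Term.var x

/-! ## β-reduction (closure of the root rule under arbitrary term contexts) -/

inductive Beta : Term → Term → Prop
  | beta (x : ℕ) (t u : Term) : Beta (Term.app (Term.lam x t) u) (Term.subst x u t)
  | lam {t t' : Term} (x : ℕ) : Beta t t' → Beta (Term.lam x t) (Term.lam x t')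
  | appL {t t' : Term} (u : Term) : Beta t t' → Beta (Term.app t u) (Term.app t' u)
  | appR {u u' : Term} (t : Term) : Beta u u' → Beta (Term.app t u) (Term.app t u')

/-- `iterRel R n a b`: an n-step R-reduction sequence from a to b. -/
def iterRel {α : Type} (R : α → α → Prop) : ℕ → α → α → Prop
  | 0 => Eq
  | n + 1 => fun a c => ∃ b, R a b ∧ iterRel R n b c

/-! ## Environments and programs -/

/-- Environments are finite lists of explicit substitutions, written
left-to-right, i.e. E[x←t] is `E ++ [(x, t)]`. -/
abbrev Env := List (ℕ × Term)

def Env.dom (E : Env) : Finset ℕ := (E.map Prod.fst).toFinset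

/-- Content of the leftmost explicit substitution on x. -/
def Env.lookupES : Env → ℕ → Option Term
  | [], _ => none
  | (y, t) :: E, x => if y = x then some t else Env.lookupES E x

structure Program where
  tm : Term
  env : Env

/-- p@[x←u] : appending an explicit substitution at the end of the environment. -/
def Program.appES (p : Program) (x : ℕ) (u : Term) : Program := ⟨p.tm, p.env ++ [(x, u)]⟩

/-- One step of the needed-variables computation along an explicit substitution. -/
def nvStep (V : Finset ℕ) (e : ℕ × Term) : Finset ℕ :=
  if e.1 ∈ V then (V.erase e.1) ∪ Term.nv e.2 else V

/-- Needed variables of a program. -/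
def Program.nv (p : Program) : Finset ℕ := p.env.foldl nvStep p.tm.nv

/-- One step of the applied-variables computation (carrying needed variables). -/
def anvStep : Finset ℕ × Finset ℕ → ℕ × Term → Finset ℕ × Finset ℕ
  | (N, A), (x, u) =>
    (nvStep N (x, u),
      if x ∈ N then
        match u with
        | Term.var y => if x ∈ A then (A.erase x) ∪ {y} else A.erase x
        | _ => (A.erase x) ∪ Term.anv u
      else A)

/-- Applied variables of a program. -/
def Program.anv (p : Program) : Finset ℕ :=
  (p.env.foldl anvStep (p.tm.nv, p.tm.anv)).2

/-- One step of the unapplied-variables computation (carrying needed variables). -/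
def unvStep : Finset ℕ × Finset ℕ → ℕ × Term → Finset ℕ × Finset ℕ
  | (N, U), (x, u) =>
    (nvStep N (x, u),
      if x ∈ U ∨ (x ∈ N ∧ u.isVarB = false) then (U.erase x) ∪ Term.unv u else U)

/-- Unapplied variables of a program. -/
def Program.unv (p : Program) : Finset ℕ :=
  (p.env.foldl unvStep (p.tm.nv, p.tm.unv)).2

/-- Unfolding of a program into a term: unf(t, ε) = t, unf(t, E[x←u]) = unf(t, E){x←u}. -/
def Program.unf (p : Program) : Term :=
  p.env.foldl (fun s e => Term.subst e.1 e.2 s) p.tm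

/-! ## Term contexts H ::= ⟨·⟩ | H t | i H (i inert, enforced by WF) -/

inductive HCtx : Type
  | hole : HCtx
  | appL : HCtx → Term → HCtx
  | appR : Term → HCtx → HCtx

namespace HCtx

/-- Well-formedness: in i H, the left part i must be an inert term. -/
def WF : HCtx → Prop
  | hole => True
  | appL H _ => WF H
  | appR i H => Term.Inert i ∧ WF H

def plug : HCtx → Term → Term
  | hole, t => t
  | appL H u, t => Term.app (plug H t) u
  | appR i H, t => Term.app i (plug H t)

def nv : HCtx → Finset ℕ
  | hole => ∅
  | appL H _ => nv H
  | appR i H => Term.nv i ∪ nv H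

def anv : HCtx → Finset ℕ
  | hole => ∅
  | appL H _ => anv H
  | appR i H => Term.anv i ∪ anv H

def unv : HCtx → Finset ℕ
  | hole => ∅
  | appL H _ => unv H
  | appR i H => Term.unv i ∪ unv H

end HCtx

/-- Applicative term contexts H@ ::= ⟨·⟩ t | H@ t | i H@. -/
inductive HCtx.IsApp : HCtx → Prop
  | base (t : Term) : HCtx.IsApp (HCtx.appL HCtx.hole t)
  | appL {H : HCtx} (t : Term) : HCtx.IsApp H → HCtx.IsApp (HCtx.appL H t)
  | appR {H : HCtx} {i : Term} : Term.Inert i → HCtx.IsApp H → HCtx.IsApp (HCtx.appR i H)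

/-! ## Program contexts: hole in the term part (tc) or inside an ES (ec) -/

inductive PCtx : Type
  | tc : HCtx → Env → PCtx
  | ec : Term → Env → ℕ → HCtx → Env → PCtx

namespace PCtx

/-- P@[x←u] : appending an explicit substitution at the end of the environment of P. -/
def appES : PCtx → ℕ → Term → PCtx
  | tc H E, x, u => tc H (E ++ [(x, u)])
  | ec t E1 y H E2, x, u => ec t E1 y H (E2 ++ [(x, u)])

/-- Plugging a term into a program context. -/
def plugT : PCtx → Term → Program
  | tc H E, t => ⟨H.plug t, E⟩
  | ec u E1 x H E2, t => ⟨u, E1 ++ (x, H.plug t) :: E2⟩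

/-- Plugging a program into a program context: the plugged environment is appended
right after the position of the hole. -/
def plugP : PCtx → Program → Program
  | tc H E, q => ⟨H.plug q.tm, q.env ++ E⟩
  | ec u E1 x H E2, q => ⟨u, E1 ++ (x, H.plug q.tm) :: (q.env ++ E2)⟩

/-- Variables bound by the environment of P. -/
def dom : PCtx → Finset ℕ
  | tc _ E => Env.dom E
  | ec _ E1 y _ E2 => insert y (Env.dom E1 ∪ Env.dom E2)

/-- P(x): content of the leftmost explicit substitution on x occurring after the hole. -/
def lookup : PCtx → ℕ → Option Term
  | tc _ E, x => Env.lookupES E x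
  | ec _ _ _ _ E2, x => Env.lookupES E2 x

/-- (P⟨x⟩)@[x←H] : plug the variable x in the hole of P and append the ES [x←H],
whose content H now contains the hole. -/
def hered (P : PCtx) (x : ℕ) (H : HCtx) : PCtx :=
  ec (P.plugT (Term.var x)).tm (P.plugT (Term.var x)).env x H []

end PCtx

/-! ## Open CbNeed evaluation contexts P ∈ E_V -/

inductive OEC : PCtx → Finset ℕ → Prop
  | ax {H : HCtx} : H.WF → OEC (PCtx.tc H []) H.nv
  | gc {P : PCtx} {V : Finset ℕ} {x : ℕ} (t : Term) :
      OEC P V → x ∉ V → x ∉ P.dom → OEC (P.appES x t) V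
  | inert {P : PCtx} {V : Finset ℕ} {x : ℕ} {i : Term} :
      OEC P V → x ∈ V → Term.Inert i → x ∉ P.dom →
      OEC (P.appES x i) ((V.erase x) ∪ i.nv)
  | her {P : PCtx} {V : Finset ℕ} {x : ℕ} {H : HCtx} :
      OEC P V → x ∉ V → x ∉ P.dom → H.WF →
      OEC (P.hered x H) (V ∪ H.nv)

/-! ## Open CbNeed reduction -/

inductive StepOM : Program → Program → Prop
  | mk {P : PCtx} {V : Finset ℕ} {x : ℕ} {t u : Term} :
      OEC P V →
      StepOM (P.plugT (Term.app (Term.lam x t) u)) (P.plugP ⟨t, [(x, u)]⟩)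

inductive StepOE : Program → Program → Prop
  | mk {P : PCtx} {V : Finset ℕ} {x : ℕ} {v : Term} :
      OEC P V → P.lookup x = some v → v.IsValue →
      StepOE (P.plugT (Term.var x)) (P.plugT v)

def StepOnd (p q : Program) : Prop := StepOM p q ∨ StepOE p q

/-! ## Open CbNeed normal programs -/

inductive PInert : Program → Prop
  | ax {i : Term} : i.Inert → PInert ⟨i, []⟩
  | inert {p : Program} {x : ℕ} {i : Term} :
      PInert p → x ∈ p.nv → i.Inert → PInert (p.appES x i)
  | gc {p : Program} {x : ℕ} (t : Term) :
      PInert p → x ∉ p.nv → PInert (p.appES x t)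

inductive PAbs : Program → Prop
  | ax {v : Term} : v.IsValue → PAbs ⟨v, []⟩
  | gc {p : Program} {x : ℕ} (t : Term) : PAbs p → PAbs (p.appES x t)

def ONorm (p : Program) : Prop := PInert p ∨ PAbs p

/-! ## Useful Open CbNeed: multiplicative and exponential evaluation contexts -/

def upd (S : Finset ℕ) (x y : ℕ) : Finset ℕ := if x ∈ S then (S.erase x) ∪ {y} else S

inductive MEC : PCtx → Finset ℕ → Finset ℕ → Prop
  | ax {H : HCtx} : H.WF → MEC (PCtx.tc H []) H.unv H.anv
  | var {P : PCtx} {U A : Finset ℕ} {x y : ℕ} :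
      MEC P U A → x ∈ U ∪ A → x ∉ P.dom →
      MEC (P.appES x (Term.var y)) (upd U x y) (upd A x y)
  | gc {P : PCtx} {U A : Finset ℕ} {x : ℕ} (t : Term) :
      MEC P U A → x ∉ U ∪ A → x ∉ P.dom → MEC (P.appES x t) U A
  | inert {P : PCtx} {U A : Finset ℕ} {x : ℕ} {i : Term} :
      MEC P U A → x ∈ U ∪ A → i.InertPlus → x ∉ P.dom →
      MEC (P.appES x i) ((U.erase x) ∪ i.unv) ((A.erase x) ∪ i.anv)
  | val {P : PCtx} {U A : Finset ℕ} {x : ℕ} {v : Term} :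
      MEC P U A → x ∈ U → x ∉ A → v.IsValue → x ∉ P.dom →
      MEC (P.appES x v) (U.erase x) A
  | her {P : PCtx} {U A : Finset ℕ} {x : ℕ} {H : HCtx} :
      MEC P U A → x ∉ U ∪ A → x ∉ P.dom → H.WF →
      MEC (P.hered x H) (U ∪ H.unv) (A ∪ H.anv)

/-- Exponential evaluation contexts P ∈ E@_{U,A}; the last (natural number) index
counts the number of applications of rule (e_NA) in the derivation. -/
inductive EEC : PCtx → Finset ℕ → Finset ℕ → ℕ → Prop
  | ax1 {H : HCtx} : H.IsApp → EEC (PCtx.tc H []) H.unv H.anv 0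
  | ax2 {P : PCtx} {U A : Finset ℕ} {x : ℕ} {H : HCtx} :
      MEC P U A → x ∉ U ∪ A → x ∉ P.dom → H.IsApp →
      EEC (P.hered x H) ((U.erase x) ∪ H.unv) (A ∪ H.anv) 0
  | var {P : PCtx} {U A : Finset ℕ} {k : ℕ} {x y : ℕ} :
      EEC P U A k → x ∈ U ∪ A → x ∉ P.dom →
      EEC (P.appES x (Term.var y)) (upd U x y) (upd A x y) k
  | inert {P : PCtx} {U A : Finset ℕ} {k : ℕ} {x : ℕ} {i : Term} :
      EEC P U A k → x ∈ U ∪ A → i.InertPlus → x ∉ P.dom →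
      EEC (P.appES x i) ((U.erase x) ∪ i.unv) ((A.erase x) ∪ i.anv) k
  | gc {P : PCtx} {U A : Finset ℕ} {k : ℕ} {x : ℕ} (t : Term) :
      EEC P U A k → x ∉ U ∪ A → x ∉ P.dom → EEC (P.appES x t) U A k
  | val {P : PCtx} {U A : Finset ℕ} {k : ℕ} {x : ℕ} {v : Term} :
      EEC P U A k → x ∈ U → x ∉ A → v.IsValue → x ∉ P.dom →
      EEC (P.appES x v) (U.erase x) A k
  | na {P : PCtx} {U A : Finset ℕ} {k : ℕ} {x : ℕ} :
      EEC P U A k → x ∉ A → x ∉ P.dom →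
      EEC (P.hered x HCtx.hole) (U.erase x) A (k + 1)

/-! ## Useful Open CbNeed reduction -/

inductive StepUM : Program → Program → Prop
  | mk {P : PCtx} {U A : Finset ℕ} {x : ℕ} {t u : Term} :
      MEC P U A →
      StepUM (P.plugT (Term.app (Term.lam x t) u)) (P.plugP ⟨t, [(x, u)]⟩)

inductive StepUE : Program → Program → Prop
  | mk {P : PCtx} {U A : Finset ℕ} {k : ℕ} {x : ℕ} {v : Term} :
      EEC P U A k → P.lookup x = some v → v.IsValue →
      StepUE (P.plugT (Term.var x)) (P.plugT v)

def StepUnd (p q : Program) : Prop := StepUM p q ∨ StepUE p q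

/-- Useful multiplicative steps whose evaluation context lies in Em_{U,A}. -/
def StepUMat (U A : Finset ℕ) (p q : Program) : Prop :=
  ∃ (P : PCtx) (x : ℕ) (t u : Term), MEC P U A ∧
    p = P.plugT (Term.app (Term.lam x t) u) ∧ q = P.plugP ⟨t, [(x, u)]⟩

/-- Useful exponential steps whose evaluation context lies in E@_{U,A}. -/
def StepUEat (U A : Finset ℕ) (p q : Program) : Prop :=
  ∃ (P : PCtx) (k : ℕ) (x : ℕ) (v : Term), EEC P U A k ∧
    P.lookup x = some v ∧ v.IsValue ∧
    p = P.plugT (Term.var x) ∧ q = P.plugT v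

/-! ## Useful normal-form predicates -/

inductive GenVar : ℕ → Program → Prop
  | ax (x : ℕ) : GenVar x ⟨Term.var x, []⟩
  | her {x : ℕ} {p : Program} (y : ℕ) : GenVar x p → GenVar y (p.appES x (Term.var y))
  | gc {x z : ℕ} {p : Program} (t : Term) : GenVar x p → z ≠ x → GenVar x (p.appES z t)

inductive UfAbs : Program → Prop
  | ax {v : Term} : v.IsValue → UfAbs ⟨v, []⟩
  | gv {p : Program} {x : ℕ} {v : Term} : GenVar x p → v.IsValue → UfAbs (p.appES x v)
  | gc {p : Program} {x : ℕ} (t : Term) : UfAbs p → UfAbs (p.appES x t)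

inductive UfInert : Program → Prop
  | ax {i : Term} : i.InertPlus → UfInert ⟨i, []⟩
  | gv {p : Program} {x : ℕ} {i : Term} : GenVar x p → i.InertPlus → UfInert (p.appES x i)
  | inert {p : Program} {x : ℕ} {i : Term} :
      UfInert p → x ∈ p.nv → i.Inert → UfInert (p.appES x i)
  | useless {p : Program} {x : ℕ} {v : Term} :
      UfInert p → x ∈ p.unv → x ∉ p.anv → v.IsValue → UfInert (p.appES x v)
  | gc {p : Program} {x : ℕ} (t : Term) : UfInert p → x ∉ p.nv → UfInert (p.appES x t)

def UfNorm (p : Program) : Prop := UfInert p ∨ UfAbs p ∨ ∃ x, GenVar x p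

/-! ## The size-exploding family -/

/-- t₁ := λx.λy. y x x  (x := 0, y := 1). -/
def t1 : Term := Term.lam 0 (Term.lam 1 (Term.app (Term.app (Term.var 1) (Term.var 0)) (Term.var 0)))

/-- λy. y x x. -/
def tbody : Term := Term.lam 1 (Term.app (Term.app (Term.var 1) (Term.var 0)) (Term.var 0))

/-- The family t_n (values for n ≥ 1; tfam 0 is a dummy). -/
def tfam : ℕ → Term
  | 0 => t1
  | 1 => t1
  | n + 2 => Term.lam 0 (Term.app (tfam (n + 1)) tbody)

/-- I := λz.z. -/
def Idt : Term := Term.lam 2 (Term.var 2)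

/-- The family u_n : u₀ = I, u_{n+1} = λy. y u_n u_n. -/
def ufam : ℕ → Term
  | 0 => Idt
  | n + 1 => Term.lam 1 (Term.app (Term.app (Term.var 1) (ufam n)) (ufam n))

/-!
Each predicate determines the shape of the term reached by looking variables up through the
environment: a variable for generalized variables, an abstraction for useful abstractions, a
non-variable inert term for useful inerts. A non-variable term, once reached, is never replaced by
the rest of the environment.
-/

/-- The term obtained by reading the environment left to right and replacing the current term by
the content of an explicit substitution exactly when the current term is the variable it binds.
Unlike in the unfolding `Program.unf`, nothing is substituted inside a non-variable term. -/
def Program.resolve (p : Program) : Term :=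
  p.env.foldl (fun t e => if t = Term.var e.1 then e.2 else t) p.tm

theorem Program.resolve_appES (p : Program) (x : ℕ) (u : Term) :
    (p.appES x u).resolve = if p.resolve = Term.var x then u else p.resolve :=
  List.foldl_append

theorem Program.resolve_appES_of_resolve_eq_var {p : Program} {x : ℕ} (h : p.resolve = Term.var x)
    (u : Term) : (p.appES x u).resolve = u := by
  rw [resolve_appES, if_pos h]

theorem Program.resolve_appES_of_resolve_ne_var {p : Program} {x : ℕ} (h : p.resolve ≠ Term.var x)
    (u : Term) : (p.appES x u).resolve = p.resolve := by
  rw [resolve_appES, if_neg h]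

theorem Term.IsValue.ne_var {v : Term} (hv : v.IsValue) (x : ℕ) : v ≠ Term.var x := by
  rintro rfl
  obtain ⟨_, _, h⟩ := hv
  cases h

theorem Term.InertPlus.ne_var {i : Term} (hi : i.InertPlus) (x : ℕ) : i ≠ Term.var x :=
  hi.2 x

theorem Term.IsValue.not_inert {v : Term} (hv : v.IsValue) : ¬ v.Inert := by
  obtain ⟨_, _, rfl⟩ := hv
  rintro ⟨⟩

theorem GenVar.resolve_eq_var {x : ℕ} {p : Program} (h : GenVar x p) : p.resolve = Term.var x := by
  induction h with
  | ax x => rfl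
  | her y _ ih => exact Program.resolve_appES_of_resolve_eq_var ih _
  | @gc x z p t _ hzx ih =>
    have h_ne : p.resolve ≠ Term.var z := fun h => hzx (Term.var.inj (h.symm.trans ih))
    rw [Program.resolve_appES_of_resolve_ne_var h_ne, ih]

theorem UfAbs.isValue_resolve {p : Program} (h : UfAbs p) : p.resolve.IsValue := by
  induction h with
  | ax hv => exact hv
  | gv hx hv => rwa [Program.resolve_appES_of_resolve_eq_var hx.resolve_eq_var]
  | gc t _ ih => rwa [Program.resolve_appES_of_resolve_ne_var (ih.ne_var _)]

theorem UfInert.inertPlus_resolve {p : Program} (h : UfInert p) : p.resolve.InertPlus := by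
  induction h with
  | ax hi => exact hi
  | gv hx hi => rwa [Program.resolve_appES_of_resolve_eq_var hx.resolve_eq_var]
  | inert _ _ _ ih | useless _ _ _ _ ih | gc _ _ _ ih =>
    rwa [Program.resolve_appES_of_resolve_ne_var (ih.ne_var _)]

/-- disjointness of the useful predicates: for every program,
they are pairwise incompatible. -/
theorem useful_predicates_pairwise_disjoint :
    ∀ p : Program,
      (¬ ((∃ x, GenVar x p) ∧ UfAbs p)) ∧
      (¬ ((∃ x, GenVar x p) ∧ UfInert p)) ∧
      (¬ (UfAbs p ∧ UfInert p)) := by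
  intro p
  refine ⟨?_, ?_, ?_⟩
  · rintro ⟨⟨x, hvar⟩, habs⟩
    exact habs.isValue_resolve.ne_var x hvar.resolve_eq_var
  · rintro ⟨⟨x, hvar⟩, hinert⟩
    exact hinert.inertPlus_resolve.ne_var x hvar.resolve_eq_var
  · rintro ⟨habs, hinert⟩
    exact habs.isValue_resolve.not_inert hinert.inertPlus_resolve.1
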